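/- None of the graphs K₃ (the triangle), 2K₂ + K₁ (two disjoint edges plus an isolated vertex), C₅ + K₁ (a chordless 5-cycle plus an isolated vertex), and C₆ (the chordless 6-cycle) is a 3-letter graph with the decoder {(a,b),(b,c),(c,a)} over the alphabet {a,b,c}; equivalently, none of them is nice. -/

import Mathlib

/-- The letter graph of a word `w` over an alphabet `α` with decoder `P`:
vertices are positions `1,…,n`, and `i` is adjacent to `j > i` iff `(wᵢ, wⱼ) ∈ P`. -/
def letterGraph {n : ℕ} {α : Type*} (P : α → α → Prop) (w : Fin n → α) :
    SimpleGraph (Fin n) where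
  Adj i j := (i < j ∧ P (w i) (w j)) ∨ (j < i ∧ P (w j) (w i))
  symm := by
    constructor
    intro i j h
    rcases h with h | h
    · exact Or.inr h
    · exact Or.inl h
  loopless := by
    constructor
    intro i h
    rcases h with h | h <;> exact lt_irrefl i h.1

/-- `s` is an independent set in `G`. -/
def IsIndepSetOn {V : Type} (G : SimpleGraph V) (s : Set V) : Prop :=
  s.Pairwise fun x y => ¬ G.Adj x y

/-- The graph `2K₂`: two disjoint edges. -/
def twoK2 : SimpleGraph (Fin 4) := SimpleGraph.fromEdgeSet {s(0,1), s(2,3)}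

/-- `(A,B,C)` is a nice triple in `G`: `A`, `B`, `C` are pairwise disjoint independent
sets, the induced bipartite subgraphs `G[A ∪ B]`, `G[B ∪ C]`, `G[C ∪ A]` are `2K₂`-free,
and no `a ∈ A`, `b ∈ B`, `c ∈ C` induce a triangle or an anti-triangle. -/
def NiceTriple {V : Type} (G : SimpleGraph V) (A B C : Set V) : Prop :=
  Disjoint A B ∧ Disjoint A C ∧ Disjoint B C ∧
  IsIndepSetOn G A ∧ IsIndepSetOn G B ∧ IsIndepSetOn G C ∧
  IsEmpty (twoK2 ↪g G.induce (A ∪ B)) ∧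
  IsEmpty (twoK2 ↪g G.induce (B ∪ C)) ∧
  IsEmpty (twoK2 ↪g G.induce (C ∪ A)) ∧
  ∀ a ∈ A, ∀ b ∈ B, ∀ c ∈ C,
    ¬(G.Adj a b ∧ G.Adj b c ∧ G.Adj a c) ∧
    ¬(¬G.Adj a b ∧ ¬G.Adj b c ∧ ¬G.Adj a c)

/-- `G` is nice: its vertex set is partitioned into a nice triple. -/
def IsNice {V : Type} (G : SimpleGraph V) : Prop :=
  ∃ A B C : Set V, A ∪ B ∪ C = Set.univ ∧ NiceTriple G A B C

/-- The cyclic decoder `{(a,b),(b,c),(c,a)}` over the alphabet `{a,b,c} = Fin 3`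
(`a = 0`, `b = 1`, `c = 2`). -/
def cyclicDecoder : Fin 3 → Fin 3 → Prop := fun x y =>
  (x = 0 ∧ y = 1) ∨ (x = 1 ∧ y = 2) ∨ (x = 2 ∧ y = 0)

/-- `G` is a 3-letter graph with the decoder `{(a,b),(b,c),(c,a)}`. -/
def IsCyclic3Letter {V : Type} (G : SimpleGraph V) : Prop :=
  ∃ (n : ℕ) (w : Fin n → Fin 3), Nonempty (G ≃g letterGraph cyclicDecoder w)

/-- The triangle `K₃`. -/
def K3 : SimpleGraph (Fin 3) := ⊤

/-- The graph `2K₂ + K₁`: two disjoint edges plus an isolated vertex. -/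
def twoK2K1 : SimpleGraph (Fin 5) := SimpleGraph.fromEdgeSet {s(0,1), s(2,3)}

/-- The graph `C₅ + K₁`: a chordless 5-cycle plus an isolated vertex. -/
def C5K1 : SimpleGraph (Fin 6) :=
  SimpleGraph.fromEdgeSet {s(0,1), s(1,2), s(2,3), s(3,4), s(4,0)}

/-- The chordless 6-cycle `C₆`. -/
def C6 : SimpleGraph (Fin 6) :=
  SimpleGraph.fromEdgeSet {s(0,1), s(1,2), s(2,3), s(3,4), s(4,5), s(5,0)}

/-!
A nice partition is a proper 3-colouring in which every induced `2K₂` receives all three colours and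
no rainbow triple is a clique or independent. In a letter graph of the cyclic decoder the letters
form such a colouring: positions carrying `x` and `x + 1` are adjacent exactly when they occur in
this order.

A properly coloured triangle is rainbow. If `v` is isolated, a vertex not adjacent to either end of
an edge avoiding the colour of `v` must itself have that colour, since otherwise it would share its
colour with both ends; this rules out `2K₂ + K₁` and `C₅ + K₁`. In `C₆`, the three pairs of opposite
edges force vertices at distance two to have different colours, so that `0, 2, 4` is a rainbow
independent set.
-/

open Function Set

/-- A nice triple encoded as a colouring: its parts are the colour classes of `f`, the absence of
`2K₂` in the union of two parts says that every induced `2K₂` receives all three colours, and the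
last two fields forbid rainbow triangles and rainbow anti-triangles. -/
structure IsNiceColoring {V : Type*} (G : SimpleGraph V) (f : V → Fin 3) : Prop where
  ne_of_adj {u v : V} : G.Adj u v → f u ≠ f v
  surjective_comp_twoK2 (φ : twoK2 ↪g G) : Surjective (f ∘ φ)
  not_isClique {s : Set V} : SurjOn f s univ → ¬ G.IsClique s
  not_isIndepSet {s : Set V} : SurjOn f s univ → ¬ G.IsIndepSet s

theorem surjOn_univ_of_ne {V : Type*} {f : V → Fin 3} {a b c : V}
    (hab : f a ≠ f b) (hbc : f b ≠ f c) (hac : f a ≠ f c) : SurjOn f {a, b, c} univ := by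
  intro i _
  have : i = f a ∨ i = f b ∨ i = f c := by omega
  rcases this with rfl | rfl | rfl <;> exact mem_image_of_mem f (by simp)

theorem exists_triple_of_surjOn_univ {V : Type*} {f : V → Fin 3} {s : Set V} {R : V → V → Prop}
    (hs : SurjOn f s univ) (hR : s.Pairwise R) :
    ∃ a b c, f a = 0 ∧ f b = 1 ∧ f c = 2 ∧ R a b ∧ R b c ∧ R c a := by
  obtain ⟨a, has, ha⟩ := hs (mem_univ 0)
  obtain ⟨b, hbs, hb⟩ := hs (mem_univ 1)
  obtain ⟨c, hcs, hc⟩ := hs (mem_univ 2)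
  have hab : a ≠ b := by rintro rfl; omega
  have hbc : b ≠ c := by rintro rfl; omega
  have hca : c ≠ a := by rintro rfl; omega
  exact ⟨a, b, c, ha, hb, hc, hR has hbs hab, hR hbs hcs hbc, hR hcs has hca⟩

theorem isEmpty_embedding_induce_iff {V W : Type*} {G : SimpleGraph V} {H : SimpleGraph W}
    {s : Set V} : IsEmpty (H ↪g G.induce s) ↔ ∀ φ : H ↪g G, ∃ x, φ x ∉ s := by
  rw [← not_iff_not, not_isEmpty_iff]
  push Not
  exact ⟨fun ⟨φ⟩ => ⟨(SimpleGraph.Embedding.induce s).comp φ, fun x => (φ x).2⟩,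
    fun ⟨φ, hφ⟩ => ⟨RelEmbedding.codRestrict s φ hφ⟩⟩

theorem exists_preimages_eq_of_partition {V : Type*} {A B C : Set V} (hU : A ∪ B ∪ C = univ)
    (hAB : Disjoint A B) (hAC : Disjoint A C) (hBC : Disjoint B C) :
    ∃ f : V → Fin 3, f ⁻¹' {0} = A ∧ f ⁻¹' {1} = B ∧ f ⁻¹' {2} = C := by
  classical
  refine ⟨fun v => if v ∈ A then 0 else if v ∈ B then 1 else 2, ?_, ?_, ?_⟩ <;> ext v <;>
    have hv : v ∈ A ∪ B ∪ C := hU ▸ mem_univ v <;>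
    grind

section NiceTriple

variable {V : Type} {G : SimpleGraph V} {f : V → Fin 3}

theorem NiceTriple.isNiceColoring (h : NiceTriple G (f ⁻¹' {0}) (f ⁻¹' {1}) (f ⁻¹' {2})) :
    IsNiceColoring G f := by
  obtain ⟨-, -, -, h0, h1, h2, h01, h12, h20, hT⟩ := h
  rw [isEmpty_embedding_induce_iff] at h01 h12 h20
  refine ⟨fun {u v} huv hfuv => ?_, fun φ => ?_, fun {s} hs hclique => ?_,
    fun {s} hs hindep => ?_⟩
  · have : f u = 0 ∨ f u = 1 ∨ f u = 2 := by omega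
    rcases this with hu | hu | hu
    · exact h0 hu (hfuv.symm.trans hu) huv.ne huv
    · exact h1 hu (hfuv.symm.trans hu) huv.ne huv
    · exact h2 hu (hfuv.symm.trans hu) huv.ne huv
  · obtain ⟨x, hx⟩ := h01 φ
    obtain ⟨y, hy⟩ := h12 φ
    obtain ⟨z, hz⟩ := h20 φ
    simp only [mem_union, mem_preimage, mem_singleton_iff, not_or] at hx hy hz
    intro i
    have : i = f (φ x) ∨ i = f (φ y) ∨ i = f (φ z) := by omega
    rcases this with rfl | rfl | rfl <;> exact mem_range_self (f := f ∘ φ) _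
  · obtain ⟨a, b, c, ha, hb, hc, hab, hbc, hca⟩ := exists_triple_of_surjOn_univ hs hclique
    exact (hT a ha b hb c hc).1 ⟨hab, hbc, hca.symm⟩
  · obtain ⟨a, b, c, ha, hb, hc, hab, hbc, hca⟩ := exists_triple_of_surjOn_univ hs hindep
    exact (hT a ha b hb c hc).2 ⟨hab, hbc, fun hac => hca hac.symm⟩

theorem IsNiceColoring.niceTriple (hf : IsNiceColoring G f) :
    NiceTriple G (f ⁻¹' {0}) (f ⁻¹' {1}) (f ⁻¹' {2}) := by
  have disjoint {i j : Fin 3} (hij : i ≠ j) : Disjoint (f ⁻¹' {i}) (f ⁻¹' {j}) :=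
    Disjoint.preimage f (disjoint_singleton.2 hij)
  have indep (i : Fin 3) : IsIndepSetOn G (f ⁻¹' {i}) := fun u hu v hv _ huv =>
    hf.ne_of_adj huv (hu.trans hv.symm)
  have twoK2_free {i j k : Fin 3} (hik : i ≠ k) (hjk : j ≠ k) :
      IsEmpty (twoK2 ↪g G.induce (f ⁻¹' {i} ∪ f ⁻¹' {j})) :=
    isEmpty_embedding_induce_iff.2 fun φ => by
      obtain ⟨x, hx : f (φ x) = k⟩ := hf.surjective_comp_twoK2 φ k
      exact ⟨x, by simp [hx, hik.symm, hjk.symm]⟩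
  refine ⟨disjoint (by decide), disjoint (by decide), disjoint (by decide), indep 0, indep 1,
    indep 2, twoK2_free (k := 2) (by decide) (by decide),
    twoK2_free (k := 0) (by decide) (by decide), twoK2_free (k := 1) (by decide) (by decide),
    fun a ha b hb c hc => ?_⟩
  have hs : SurjOn f {a, b, c} univ := by
    rw [mem_preimage, mem_singleton_iff] at ha hb hc
    exact surjOn_univ_of_ne (by omega) (by omega) (by omega)
  exact ⟨fun h => hf.not_isClique hs (by simp_all), fun h => hf.not_isIndepSet hs (by
    simp_all [SimpleGraph.IsIndepSet, Set.pairwise_insert, G.adj_comm])⟩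

theorem isNice_iff_exists_isNiceColoring : IsNice G ↔ ∃ f, IsNiceColoring G f := by
  constructor
  · rintro ⟨A, B, C, hU, h⟩
    obtain ⟨f, rfl, rfl, rfl⟩ := exists_preimages_eq_of_partition hU h.1 h.2.1 h.2.2.1
    exact ⟨f, h.isNiceColoring⟩
  · rintro ⟨f, hf⟩
    refine ⟨_, _, _, eq_univ_of_forall fun v => ?_, hf.niceTriple⟩
    simp only [mem_union, mem_preimage, mem_singleton_iff]
    omega

end NiceTriple

section LetterGraph

theorem cyclicDecoder_iff {x y : Fin 3} : cyclicDecoder x y ↔ y = x + 1 := by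
  simp only [cyclicDecoder]
  omega

variable {n : ℕ} {w : Fin n → Fin 3} {i j : Fin n}

theorem letterGraph_cyclicDecoder_adj :
    (letterGraph cyclicDecoder w).Adj i j ↔
      (i < j ∧ w j = w i + 1) ∨ (j < i ∧ w i = w j + 1) := by
  simp only [letterGraph, cyclicDecoder_iff]

theorem letterGraph_cyclicDecoder_adj_iff_lt (h : w j = w i + 1) :
    (letterGraph cyclicDecoder w).Adj i j ↔ i < j := by
  rw [letterGraph_cyclicDecoder_adj]
  omega

theorem letterGraph_cyclicDecoder_adj_or_adj {a b c d : Fin n} (hb : w b = w a + 1)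
    (hc : w c = w a) (hd : w d = w a + 1) (hab : (letterGraph cyclicDecoder w).Adj a b)
    (hcd : (letterGraph cyclicDecoder w).Adj c d) :
    (letterGraph cyclicDecoder w).Adj a d ∨ (letterGraph cyclicDecoder w).Adj c b := by
  have hab : a < b := (letterGraph_cyclicDecoder_adj_iff_lt hb).1 hab
  have hcd : c < d := (letterGraph_cyclicDecoder_adj_iff_lt (hc ▸ hd)).1 hcd
  rw [letterGraph_cyclicDecoder_adj_iff_lt hd, letterGraph_cyclicDecoder_adj_iff_lt (hc ▸ hb)]
  omega

theorem surjective_comp_twoK2_letterGraph (φ : twoK2 ↪g letterGraph cyclicDecoder w) :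
    Surjective (w ∘ φ) := by
  intro z
  by_contra! hz
  have oriented {s t : Fin 4} (hst : twoK2.Adj s t) :
      w (φ s) = z + 1 ∧ w (φ t) = z + 2 ∨ w (φ t) = z + 1 ∧ w (φ s) = z + 2 := by
    have hs : w (φ s) ≠ z := hz s
    have ht : w (φ t) ≠ z := hz t
    have := letterGraph_cyclicDecoder_adj.1 (φ.map_adj_iff.2 hst)
    omega
  have no_chain {a b c d : Fin 4} (hab : twoK2.Adj a b) (hcd : twoK2.Adj c d)
      (had : ¬ twoK2.Adj a d) (hcb : ¬ twoK2.Adj c b)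
      (h : w (φ a) = z + 1 ∧ w (φ b) = z + 2) :
      ¬ (w (φ c) = z + 1 ∧ w (φ d) = z + 2) := by
    intro h'
    have := letterGraph_cyclicDecoder_adj_or_adj (w := w) (a := φ a) (b := φ b) (c := φ c)
      (d := φ d) (by omega) (by omega) (by omega) (φ.map_adj_iff.2 hab) (φ.map_adj_iff.2 hcd)
    simp [φ.map_adj_iff, had, hcb] at this
  have h01 : twoK2.Adj 0 1 := by simp [twoK2]
  have h23 : twoK2.Adj 2 3 := by simp [twoK2]
  rcases oriented h01 with h | h <;> rcases oriented h23 with h' | h'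
  · exact no_chain h01 h23 (by simp [twoK2]) (by simp [twoK2]) h h'
  · exact no_chain h01 h23.symm (by simp [twoK2]) (by simp [twoK2]) h h'
  · exact no_chain h01.symm h23 (by simp [twoK2]) (by simp [twoK2]) h h'
  · exact no_chain h01.symm h23.symm (by simp [twoK2]) (by simp [twoK2]) h h'

theorem isNiceColoring_letterGraph (w : Fin n → Fin 3) :
    IsNiceColoring (letterGraph cyclicDecoder w) w where
  ne_of_adj h := by
    rw [letterGraph_cyclicDecoder_adj] at h
    omega
  surjective_comp_twoK2 := surjective_comp_twoK2_letterGraph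
  not_isClique hs hclique := by
    obtain ⟨a, b, c, ha, hb, hc, hab, hbc, hca⟩ := exists_triple_of_surjOn_univ hs hclique
    rw [letterGraph_cyclicDecoder_adj_iff_lt (by simp [*])] at hab hbc hca
    exact lt_irrefl a (hab.trans (hbc.trans hca))
  not_isIndepSet hs hindep := by
    obtain ⟨a, b, c, ha, hb, hc, hab, hbc, hca⟩ := exists_triple_of_surjOn_univ hs hindep
    rw [letterGraph_cyclicDecoder_adj_iff_lt (by simp [*]), not_lt] at hab hbc hca
    have : a = b := le_antisymm (hca.trans hbc) hab
    simp_all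

end LetterGraph

theorem IsNiceColoring.comp_embedding {V W : Type*} {G : SimpleGraph V} {H : SimpleGraph W}
    {f : V → Fin 3} (hf : IsNiceColoring G f) (e : H ↪g G) : IsNiceColoring H (f ∘ e) where
  ne_of_adj h := hf.ne_of_adj (e.map_adj_iff.2 h)
  surjective_comp_twoK2 φ := hf.surjective_comp_twoK2 (e.comp φ)
  not_isClique {s} hs hclique := hf.not_isClique (s := e '' s) (by rwa [SurjOn, ← image_comp]) <|
    (e.injective.injOn.pairwise_image).2 (hclique.imp fun _ _ => e.map_adj_iff.2)
  not_isIndepSet {s} hs hindep := hf.not_isIndepSet (s := e '' s) (by rwa [SurjOn, ← image_comp]) <|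
    (e.injective.injOn.pairwise_image).2 (hindep.imp fun _ _ => e.map_adj_iff.not.2)

theorem IsCyclic3Letter.isNice {V : Type} {G : SimpleGraph V} (h : IsCyclic3Letter G) :
    IsNice G := by
  obtain ⟨n, w, ⟨e⟩⟩ := h
  exact isNice_iff_exists_isNiceColoring.2
    ⟨_, (isNiceColoring_letterGraph w).comp_embedding e.toEmbedding⟩

namespace IsNiceColoring

variable {V : Type*} {G : SimpleGraph V} {f : V → Fin 3}

theorem cliqueFree_three (hf : IsNiceColoring G f) : G.CliqueFree 3 := by
  intro s hs
  have inj : InjOn f s := fun u hu v hv huv => by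
    by_contra hne
    exact hf.ne_of_adj (hs.isClique hu hv hne) huv
  have image_univ : s.image f = Finset.univ :=
    Finset.eq_univ_of_card _ (by rw [Finset.card_image_of_injOn inj, hs.card_eq, Fintype.card_fin])
  exact hf.not_isClique (fun i _ => by simpa using image_univ.ge (Finset.mem_univ i)) hs.isClique

theorem eq_of_not_adj_of_isIsolated (hf : IsNiceColoring G f) {u v x : V} (hv : G.IsIsolated v)
    (hux : ¬ G.Adj u x) (hu : f u ≠ f v) (hx : f x ≠ f v) : f u = f x := by
  by_contra hne
  refine hf.not_isIndepSet (surjOn_univ_of_ne hu.symm hne hx.symm) ?_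
  simp [SimpleGraph.IsIndepSet, Set.pairwise_insert, G.adj_comm _ v, G.adj_comm x u, hux, hv u,
    hv x]

theorem eq_of_isIsolated_of_adj (hf : IsNiceColoring G f) {u v x y : V} (hv : G.IsIsolated v)
    (hxy : G.Adj x y) (hux : ¬ G.Adj u x) (huy : ¬ G.Adj u y) (hx : f x ≠ f v) (hy : f y ≠ f v) :
    f u = f v := by
  by_contra hu
  exact hf.ne_of_adj hxy <| (hf.eq_of_not_adj_of_isIsolated hv hux hu hx).symm.trans
    (hf.eq_of_not_adj_of_isIsolated hv huy hu hy)

end IsNiceColoring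

theorem not_isNice_K3 : ¬ IsNice K3 := by
  rw [isNice_iff_exists_isNiceColoring]
  rintro ⟨f, hf⟩
  exact hf.cliqueFree_three Finset.univ ⟨by simp [K3], rfl⟩

section TwoK2K1

theorem exists_disjoint_edge_of_twoK2_adj {x y : Fin 4} (h : twoK2.Adj x y) :
    ∃ s t, twoK2.Adj s t ∧ ¬ twoK2.Adj s x ∧ ¬ twoK2.Adj s y ∧ ¬ twoK2.Adj t x ∧
      ¬ twoK2.Adj t y := by
  revert x y
  simp only [twoK2]
  decide

theorem isIsolated_last_twoK2K1 : twoK2K1.IsIsolated (Fin.last 4) := by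
  simp only [SimpleGraph.IsIsolated, twoK2K1]
  decide

/-- The two edges of `2K₂ + K₁` as an induced copy of `2K₂`, used to test colourings on it. -/
def twoK2K1.twoK2Embedding : twoK2 ↪g twoK2K1 where
  toEmbedding := Fin.castSuccEmb
  map_rel_iff' {i j} := by
    revert i j
    simp only [twoK2, twoK2K1]
    decide

theorem not_isNice_twoK2K1 : ¬ IsNice twoK2K1 := by
  rw [isNice_iff_exists_isNiceColoring]
  rintro ⟨f, hf⟩
  have hv := isIsolated_last_twoK2K1
  set k := f (Fin.last 4)
  let φ := twoK2K1.twoK2Embedding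
  obtain ⟨x, hx : f (φ x) = k + 1⟩ := hf.surjective_comp_twoK2 φ (k + 1)
  obtain ⟨y, hy : f (φ y) = k + 2⟩ := hf.surjective_comp_twoK2 φ (k + 2)
  have hxk : f (φ x) ≠ k := by omega
  have hyk : f (φ y) ≠ k := by omega
  have hxy : twoK2.Adj x y := by
    by_contra hxy
    have := hf.eq_of_not_adj_of_isIsolated hv (φ.map_adj_iff.not.2 hxy) hxk hyk
    omega
  obtain ⟨s, t, hst, hsx, hsy, htx, hty⟩ := exists_disjoint_edge_of_twoK2_adj hxy
  have eq_k {u : Fin 4} (hux : ¬ twoK2.Adj u x) (huy : ¬ twoK2.Adj u y) : f (φ u) = k :=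
    hf.eq_of_isIsolated_of_adj hv (φ.map_adj_iff.2 hxy) (φ.map_adj_iff.not.2 hux)
      (φ.map_adj_iff.not.2 huy) hxk hyk
  exact hf.ne_of_adj (φ.map_adj_iff.2 hst) ((eq_k hsx hsy).trans (eq_k htx hty).symm)

end TwoK2K1

section C5K1

theorem C5K1_adj_castSucc (i j : Fin 5) :
    C5K1.Adj i.castSucc j.castSucc ↔ j = i + 1 ∨ i = j + 1 := by
  revert i j
  simp only [C5K1]
  decide

theorem isIsolated_last_C5K1 : C5K1.IsIsolated (Fin.last 5) := by
  simp only [SimpleGraph.IsIsolated, C5K1]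
  decide

theorem not_isNice_C5K1 : ¬ IsNice C5K1 := by
  rw [isNice_iff_exists_isNiceColoring]
  rintro ⟨f, hf⟩
  set k := f (Fin.last 5)
  let g (i : Fin 5) : Fin 3 := f i.castSucc
  have adj {i j : Fin 5} (h : j = i + 1) : C5K1.Adj i.castSucc j.castSucc :=
    (C5K1_adj_castSucc i j).2 (Or.inl h)
  have not_both {i j : Fin 5} (h : j = i + 1) (hi : g i = k) : g j ≠ k := fun hj =>
    hf.ne_of_adj (adj h) (hi.trans hj.symm)
  have opposite {i j l : Fin 5} (hj : j = i + 1) (hl : l = i + 3) (hik : g i ≠ k)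
      (hjk : g j ≠ k) : g l = k :=
    hf.eq_of_isIsolated_of_adj isIsolated_last_C5K1 (adj hj)
      (by rw [C5K1_adj_castSucc]; omega) (by rw [C5K1_adj_castSucc]; omega) hik hjk
  have add_two {i j : Fin 5} (hj : j = i + 2) (hi : g i = k) : g j = k := by
    by_contra hjk
    have h4 : g (i + 4) = k := opposite (i := i + 1) (by omega) (by omega) (not_both rfl hi) hjk
    exact not_both (by omega) h4 hi
  obtain ⟨i, hi⟩ : ∃ i, g i = k := by
    by_contra! h
    exact h 3 (opposite (i := 0) rfl rfl (h 0) (h 1))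
  have h2 : g (i + 2) = k := add_two rfl hi
  have h4 : g (i + 4) = k := add_two (by omega) h2
  exact not_both (by omega) h4 hi

end C5K1

section C6

theorem C6_adj (i j : Fin 6) : C6.Adj i j ↔ j = i + 1 ∨ i = j + 1 := by
  revert i j
  simp only [C6]
  decide

/-- The induced `2K₂` of `C₆` formed by the edge from `i` to `i + 1` and the edge opposite to it,
with arithmetic modulo 6; in a nice colouring these four vertices see all three colours. -/
def C6.twoK2Embedding (i : Fin 6) : twoK2 ↪g C6 where
  toFun := ![i, i + 1, i + 3, i + 4]
  inj' := by revert i; decide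
  map_rel_iff' {s t} := by
    revert i s t
    simp only [twoK2, Embedding.coeFn_mk, C6_adj]
    decide

theorem IsNiceColoring.eq_or_of_opposite_edges_C6 {f : Fin 6 → Fin 3} (hf : IsNiceColoring C6 f)
    (z : Fin 3) {a b c d : Fin 6} (hb : b = a + 1) (hc : c = a + 3) (hd : d = a + 4) :
    f a = z ∨ f b = z ∨ f c = z ∨ f d = z := by
  subst hb hc hd
  have : ∃ s, f (![a, a + 1, a + 3, a + 4] s) = z :=
    hf.surjective_comp_twoK2 (C6.twoK2Embedding a) z
  simpa [Fin.exists_fin_succ] using this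

theorem IsNiceColoring.ne_add_two_of_C6 {f : Fin 6 → Fin 3} (hf : IsNiceColoring C6 f) (i : Fin 6) :
    f i ≠ f (i + 2) := by
  intro h
  have ne {a b : Fin 6} (hb : b = a + 1) : f a ≠ f b := hf.ne_of_adj ((C6_adj a b).2 (Or.inl hb))
  have h01 : f i ≠ f (i + 1) := ne rfl
  have h23 : f (i + 2) ≠ f (i + 3) := ne (by omega)
  have h34 : f (i + 3) ≠ f (i + 4) := ne (by omega)
  have h45 : f (i + 4) ≠ f (i + 5) := ne (by omega)
  have h50 : f (i + 5) ≠ f i := ne (by omega)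
  have h35 : f (i + 3) ≠ f (i + 5) := by
    intro h35
    obtain ⟨z, hz, hz'⟩ := Fin.exists_ne_and_ne_of_two_lt (f i) (f (i + 3)) (by decide)
    rcases hf.eq_or_of_opposite_edges_C6 z (a := i + 2) (b := i + 3) (c := i + 5) (d := i)
      (by omega) (by omega) (by omega) with h' | h' | h' | h'
    · exact hz (h.trans h').symm
    · exact hz' h'.symm
    · exact hz' (h35.trans h').symm
    · exact hz h'.symm
  have h1 : f (i + 1) = f (i + 3) ∨ f (i + 1) = f (i + 5) := by omega
  rcases h1 with h13 | h15
  · rcases hf.eq_or_of_opposite_edges_C6 (f (i + 5)) (a := i) rfl rfl rfl with h' | h' | h' | h'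
    · exact h50 h'.symm
    · exact h35 (h13.symm.trans h')
    · exact h35 h'
    · exact h45 h'
  · rcases hf.eq_or_of_opposite_edges_C6 (f (i + 3)) (a := i + 1) (b := i + 2) (c := i + 4)
      (d := i + 5) (by omega) (by omega) (by omega) with h' | h' | h' | h'
    · exact h35 (h'.symm.trans h15)
    · exact h23 h'
    · exact h34 h'.symm
    · exact h35 h'.symm

theorem not_isNice_C6 : ¬ IsNice C6 := by
  rw [isNice_iff_exists_isNiceColoring]
  rintro ⟨f, hf⟩
  refine hf.not_isIndepSet (surjOn_univ_of_ne (hf.ne_add_two_of_C6 0) (hf.ne_add_two_of_C6 2)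
    (hf.ne_add_two_of_C6 4).symm) ?_
  simp [SimpleGraph.IsIndepSet, Set.pairwise_insert, C6_adj]

end C6

/-- None of `K₃`, `2K₂ + K₁`, `C₅ + K₁`, `C₆` is a 3-letter graph with the decoder
`{(a,b),(b,c),(c,a)}`; equivalently, none of them is nice. -/
theorem forbidden_not_cyclic3Letter :
    (¬ IsCyclic3Letter K3 ∧ ¬ IsNice K3) ∧
    (¬ IsCyclic3Letter twoK2K1 ∧ ¬ IsNice twoK2K1) ∧
    (¬ IsCyclic3Letter C5K1 ∧ ¬ IsNice C5K1) ∧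
    (¬ IsCyclic3Letter C6 ∧ ¬ IsNice C6) := by
  have both {V : Type} {G : SimpleGraph V} (h : ¬ IsNice G) : ¬ IsCyclic3Letter G ∧ ¬ IsNice G :=
    ⟨mt IsCyclic3Letter.isNice h, h⟩
  exact ⟨both not_isNice_K3, both not_isNice_twoK2K1, both not_isNice_C5K1, both not_isNice_C6⟩
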